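/- Let H ⊆ SL(4,ℂ) be the unipotent group of matrices h(a,b) with rows (1,a,b,ab),(0,1,0,b),(0,0,1,a),(0,0,0,1), a,b ∈ ℂ, acting on the space ℒ of linear forms on ℂ⁴ by (h·ℓ)(x) = ℓ(h⁻¹x). Then the only nontrivial proper H-invariant subspaces of ℒ are ⟨x₄⟩, the subspaces ⟨αx₂ + βx₃, x₄⟩ for (α,β) ≠ (0,0), and ⟨x₂, x₃, x₄⟩. -/

import Mathlib

/-- The unipotent matrices `h(a,b)`. -/
def hMat (a b : ℂ) : Matrix (Fin 4) (Fin 4) ℂ :=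
  !![1, a, b, a * b;
     0, 1, 0, b;
     0, 0, 1, a;
     0, 0, 0, 1]

/-- The coordinate linear forms on `ℂ⁴`. -/
def xcoord (i : Fin 4) : Module.Dual ℂ (Fin 4 → ℂ) :=
  LinearMap.proj i

/-!
Composing linear forms with `h(a,b)` amounts to multiplying by `(1 + a s)(1 + b t)` in
`K[s,t]/(s², t²)`, with `x₁, x₂, x₃, x₄` in the roles of `1, s, t, st`. The invariant subspaces are
therefore the ideals of this local ring: a proper one lies in the maximal ideal `⟨x₂, x₃, x₄⟩`, a
nonzero one contains the socle `⟨x₄⟩`, and the subspaces in between are those of the quotient plane.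
-/

open Module Submodule

section Interval

variable {K M : Type*} [Field K] [AddCommGroup M] [Module K M]

theorem eq_top_or_isPrincipal_of_finrank_eq_two (hM : finrank K M = 2) (U : Submodule K M) :
    U = ⊤ ∨ U.IsPrincipal := by
  have : FiniteDimensional K M := .of_finrank_pos (by lia)
  refine or_iff_not_imp_left.2 fun hU ↦ (finrank_le_one_iff_isPrincipal U).1 ?_
  have := finrank_lt hU
  lia

theorem eq_span_of_mem_of_le_span_triple {x y z : M} {W : Submodule K M} (hz : z ∈ W)
    (hW : W ≤ span K {x, y, z}) :
    W = span K {z} ∨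
    (∃ α β : K, (α, β) ≠ (0, 0) ∧ W = span K {α • x + β • y, z}) ∨
    W = span K {x, y, z} := by
  let f : K × K →ₗ[K] M := (LinearMap.toSpanSingleton K M x).coprod (.toSpanSingleton K M y)
  have span_triple : span K {x, y, z} = span K {z} ⊔ LinearMap.range f := by
    rw [LinearMap.range_coprod, LinearMap.range_toSpanSingleton, LinearMap.range_toSpanSingleton,
      span_insert, span_insert, sup_comm (span K {z}), sup_assoc]
  have W_eq : W = span K {z} ⊔ (W.comap f).map f := by
    rw [map_comap_eq, ← sup_inf_assoc_of_le _ ((span_singleton_le_iff_mem z W).2 hz),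
      ← span_triple, inf_eq_right.2 hW]
  rcases eq_top_or_isPrincipal_of_finrank_eq_two (by simp) (W.comap f) with htop | ⟨⟨α, β⟩, hline⟩
  · right; right
    rw [W_eq, htop, Submodule.map_top, span_triple]
  · have W_eq_pair : W = span K {α • x + β • y, z} := by
      rw [W_eq, hline, map_span, Set.image_singleton, sup_comm, ← span_insert]
      rfl
    by_cases hαβ : (α, β) = (0, 0)
    · left
      obtain ⟨rfl, rfl⟩ := Prod.mk.inj hαβ
      simpa using W_eq_pair
    · exact .inr (.inl ⟨α, β, hαβ, W_eq_pair⟩)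

end Interval

section Forms

variable {R : Type*} [CommSemiring R]

/-- The matrix `h(a,b)` of `hMat`, with entries in an arbitrary commutative semiring. -/
def unipotentMat (a b : R) : Matrix (Fin 4) (Fin 4) R :=
  !![1, a, b, a * b;
     0, 1, 0, b;
     0, 0, 1, a;
     0, 0, 0, 1]

/-- The coordinate forms on `R⁴`, extending `xcoord` to an arbitrary commutative semiring. As in
`xcoord`, indices start at `0`, so that `coordForm 3` is the form written `x₄` on paper. -/
def coordForm (i : Fin 4) : Dual R (Fin 4 → R) :=
  LinearMap.proj i

theorem coordForm_single (i j : Fin 4) (c : R) :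
    coordForm i (Pi.single j c) = if i = j then c else 0 :=
  Pi.single_apply j c i

theorem sum_apply_single_smul_coordForm (ℓ : Dual R (Fin 4 → R)) :
    ∑ i, ℓ (Pi.single i 1) • coordForm i = ℓ := by
  refine LinearMap.pi_ext' fun j ↦ LinearMap.ext_ring ?_
  simp [coordForm_single]

theorem comp_unipotentMat (a b : R) (ℓ : Dual R (Fin 4 → R)) :
    ℓ ∘ₗ (unipotentMat a b).mulVecLin =
      ℓ + a • (ℓ (Pi.single 0 1) • coordForm 1 + ℓ (Pi.single 2 1) • coordForm 3)
        + b • (ℓ (Pi.single 0 1) • coordForm 2 + ℓ (Pi.single 1 1) • coordForm 3)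
        + (a * b) • ℓ (Pi.single 0 1) • coordForm 3 := by
  rw [← sum_apply_single_smul_coordForm ℓ]
  ext i
  fin_cases i <;> simp [unipotentMat, coordForm, Fin.sum_univ_four] <;> ring

end Forms

section Invariant

variable {K : Type*} [Field K]

/-- Closure under the operators `s` and `t` of `K[s,t]/(s², t²)`, acting on linear forms through
`x₁, x₂, x₃, x₄ ↔ 1, s, t, st`. -/
structure IsIdealOfForms (W : Submodule K (Dual K (Fin 4 → K))) : Prop where
  s_mem : ∀ ℓ ∈ W, ℓ (Pi.single 0 1) • coordForm 1 + ℓ (Pi.single 2 1) • coordForm 3 ∈ W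
  t_mem : ∀ ℓ ∈ W, ℓ (Pi.single 0 1) • coordForm 2 + ℓ (Pi.single 1 1) • coordForm 3 ∈ W

variable {W : Submodule K (Dual K (Fin 4 → K))}

theorem IsIdealOfForms.of_invariant {a b : K} (ha : a ≠ 0) (hb : b ≠ 0)
    (hWa : ∀ ℓ ∈ W, ℓ ∘ₗ (unipotentMat a 0).mulVecLin ∈ W)
    (hWb : ∀ ℓ ∈ W, ℓ ∘ₗ (unipotentMat 0 b).mulVecLin ∈ W) : IsIdealOfForms W where
  s_mem ℓ hℓ := by
    have := hWa ℓ hℓ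
    rwa [comp_unipotentMat, mul_zero, zero_smul, zero_smul, add_zero, add_zero,
      W.add_mem_iff_right hℓ, W.smul_mem_iff ha] at this
  t_mem ℓ hℓ := by
    have := hWb ℓ hℓ
    rwa [comp_unipotentMat, zero_mul, zero_smul, zero_smul, add_zero, add_zero,
      W.add_mem_iff_right hℓ, W.smul_mem_iff hb] at this

theorem IsIdealOfForms.st_mem (hW : IsIdealOfForms W) {ℓ : Dual K (Fin 4 → K)} (hℓ : ℓ ∈ W) :
    ℓ (Pi.single 0 1) • coordForm 3 ∈ W := by
  simpa [coordForm_single] using hW.t_mem _ (hW.s_mem ℓ hℓ)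

theorem IsIdealOfForms.eq_top_of_apply_ne_zero (hW : IsIdealOfForms W)
    {ℓ : Dual K (Fin 4 → K)} (hℓ : ℓ ∈ W) (hℓ₀ : ℓ (Pi.single 0 1) ≠ 0) : W = ⊤ := by
  have h3 : coordForm 3 ∈ W := (W.smul_mem_iff hℓ₀).1 (hW.st_mem hℓ)
  have h1 : coordForm 1 ∈ W := by
    rw [← W.smul_mem_iff hℓ₀, ← W.add_mem_iff_left (W.smul_mem _ h3)]
    exact hW.s_mem ℓ hℓ
  have h2 : coordForm 2 ∈ W := by
    rw [← W.smul_mem_iff hℓ₀, ← W.add_mem_iff_left (W.smul_mem _ h3)]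
    exact hW.t_mem ℓ hℓ
  have h0 : coordForm 0 ∈ W := by
    rw [← sum_apply_single_smul_coordForm ℓ, Fin.sum_univ_four,
      W.add_mem_iff_left (W.smul_mem _ h3), W.add_mem_iff_left (W.smul_mem _ h2),
      W.add_mem_iff_left (W.smul_mem _ h1), W.smul_mem_iff hℓ₀] at hℓ
    exact hℓ
  refine eq_top_iff'.2 fun m ↦ ?_
  rw [← sum_apply_single_smul_coordForm m]
  refine W.sum_mem fun i _ ↦ W.smul_mem _ ?_
  fin_cases i <;> assumption

theorem IsIdealOfForms.le_span_of_ne_top (hW : IsIdealOfForms W) (htop : W ≠ ⊤) :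
    W ≤ span K {coordForm 1, coordForm 2, coordForm 3} := by
  intro ℓ hℓ
  have hℓ₀ : ℓ (Pi.single 0 1) = 0 := by
    by_contra hne
    exact htop (hW.eq_top_of_apply_ne_zero hℓ hne)
  refine mem_span_triple.2 ⟨ℓ (Pi.single 1 1), ℓ (Pi.single 2 1), ℓ (Pi.single 3 1), ?_⟩
  conv_rhs => rw [← sum_apply_single_smul_coordForm ℓ, Fin.sum_univ_four, hℓ₀, zero_smul, zero_add]

theorem IsIdealOfForms.coordForm_three_mem (hW : IsIdealOfForms W) (hbot : W ≠ ⊥) :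
    coordForm 3 ∈ W := by
  by_contra h3
  have eq_zero_of_smul_mem {c : K} (hc : c • coordForm 3 ∈ W) : c = 0 := by
    by_contra hne
    exact h3 ((W.smul_mem_iff hne).1 hc)
  refine hbot (W.eq_bot_iff.2 fun ℓ hℓ ↦ ?_)
  have hℓ₀ := eq_zero_of_smul_mem (hW.st_mem hℓ)
  have hℓ₁ := eq_zero_of_smul_mem (by simpa [hℓ₀] using hW.t_mem ℓ hℓ)
  have hℓ₂ := eq_zero_of_smul_mem (by simpa [hℓ₀] using hW.s_mem ℓ hℓ)
  have ℓ_eq : ℓ = ℓ (Pi.single 3 1) • coordForm 3 := by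
    conv_lhs => rw [← sum_apply_single_smul_coordForm ℓ]
    simp [Fin.sum_univ_four, hℓ₀, hℓ₁, hℓ₂]
  have hℓ₃ := eq_zero_of_smul_mem (ℓ_eq ▸ hℓ)
  rw [ℓ_eq, hℓ₃, zero_smul]

theorem stmt_9_general {a b : K} (ha : a ≠ 0) (hb : b ≠ 0)
    (hWa : ∀ ℓ ∈ W, ℓ ∘ₗ (unipotentMat a 0).mulVecLin ∈ W)
    (hWb : ∀ ℓ ∈ W, ℓ ∘ₗ (unipotentMat 0 b).mulVecLin ∈ W)
    (hbot : W ≠ ⊥) (htop : W ≠ ⊤) :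
    W = span K {coordForm 3} ∨
    (∃ α β : K, (α, β) ≠ (0, 0) ∧
      W = span K {α • coordForm 1 + β • coordForm 2, coordForm 3}) ∨
    W = span K {coordForm 1, coordForm 2, coordForm 3} :=
  have hW : IsIdealOfForms W := .of_invariant ha hb hWa hWb
  eq_span_of_mem_of_le_span_triple (hW.coordForm_three_mem hbot) (hW.le_span_of_ne_top htop)

end Invariant

/-- Classification of the nontrivial proper `H`-invariant subspaces of the dual of `ℂ⁴`
under the dual action `(h·ℓ)(x) = ℓ(h⁻¹x)` (note `h(a,b)⁻¹ = h(-a,-b)`). -/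
theorem stmt_9 (V : Submodule ℂ (Module.Dual ℂ (Fin 4 → ℂ)))
    (hinv : ∀ (a b : ℂ), ∀ ℓ ∈ V, ℓ.comp (hMat (-a) (-b)).mulVecLin ∈ V)
    (hbot : V ≠ ⊥) (htop : V ≠ ⊤) :
    V = Submodule.span ℂ {xcoord 3} ∨
    (∃ α β : ℂ, (α, β) ≠ (0, 0) ∧
      V = Submodule.span ℂ {α • xcoord 1 + β • xcoord 2, xcoord 3}) ∨
    V = Submodule.span ℂ {xcoord 1, xcoord 2, xcoord 3} :=
  have hone : (-1 : ℂ) ≠ 0 := neg_ne_zero.2 one_ne_zero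
  stmt_9_general hone hone (neg_zero (G := ℂ) ▸ hinv 1 0) (neg_zero (G := ℂ) ▸ hinv 0 1) hbot htop
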